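/- Let −2 < η1 < 2 and h > 0. Set β = √(4 − η1²) and let z₊ be the complex square root with positive real part of (η1 − i·β)/2. Then ∫₀^∞ u·J₀(u·h)/(1 + η1·u² + u⁴) du = (2/β)·Im(K₀(h·z₊)), where K₀(w) = ∫₀^∞ exp(−w cosh t) dt for complex w with Re w > 0. Consequently the two-dimensional Spartan covariance C(h) = (η0/2π)·∫₀^∞ u·J₀(u·h)/(1 + η1·u² + u⁴) du equals η0·Im(K₀(h·z₊))/(π·√(4 − η1²)) for every amplitude η0 > 0. -/

import Mathlib

open MeasureTheory Real

/-- Bessel function of the first kind of order zero,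
`J₀(x) = (1/π) ∫₀^π cos (x sin θ) dθ`. -/
noncomputable def besselJ0 (x : ℝ) : ℝ :=
  (1 / Real.pi) * ∫ θ in (0:ℝ)..Real.pi, Real.cos (x * Real.sin θ)

/-- Modified Bessel function of the second kind of order zero of a complex
argument with `Re w > 0`, `K₀(w) = ∫₀^∞ exp (−w cosh t) dt`. -/
noncomputable def besselK0C (w : ℂ) : ℂ :=
  ∫ t in Set.Ioi (0:ℝ), Complex.exp (-w * (Real.cosh t : ℂ))

theorem continuous_besselJ0 : Continuous besselJ0 := by
  unfold besselJ0
  refine continuous_const.mul ?_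
  exact intervalIntegral.continuous_parametric_intervalIntegral_of_continuous'
    (by simp only [Function.uncurry_def]; fun_prop) _ _

theorem abs_besselJ0_le_one (x : ℝ) : |besselJ0 x| ≤ 1 := by
  have key := intervalIntegral.norm_integral_le_of_norm_le_const (a := 0) (b := π) (C := 1)
    (f := fun θ => Real.cos (x * Real.sin θ)) (fun θ _ => Real.abs_cos_le_one _)
  rw [Real.norm_eq_abs, sub_zero, one_mul, abs_of_pos pi_pos] at key
  rw [besselJ0, abs_mul, abs_of_pos (by positivity : 0 < 1 / π), one_div, inv_mul_le_iff₀ pi_pos,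
    mul_one]
  exact key

theorem integral_cos_mul_sin (x : ℝ) :
    ∫ θ in Set.Ioo (-π) π, Real.cos (x * Real.sin θ) = 2 * π * besselJ0 x := by
  have hc : Continuous fun θ => Real.cos (x * Real.sin θ) := by fun_prop
  have hneg : ∫ θ in (-π)..0, Real.cos (x * Real.sin θ)
      = ∫ θ in (0:ℝ)..π, Real.cos (x * Real.sin θ) := by
    simpa using (intervalIntegral.integral_comp_neg (a := 0) (b := π)
      (fun θ => Real.cos (x * Real.sin θ))).symm
  rw [← integral_Ioc_eq_integral_Ioo, ← intervalIntegral.integral_of_le (by linarith [pi_pos]),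
    ← intervalIntegral.integral_add_adjacent_intervals (hc.intervalIntegrable _ 0)
      (hc.intervalIntegrable _ _), hneg, besselJ0]
  field_simp
  ring

theorem integral_exp_neg_mul_sq_mul_cos {s : ℝ} (hs : 0 < s) (h : ℝ) :
    ∫ x : ℝ, Real.exp (-s * x ^ 2) * Real.cos (h * x)
      = √(π / s) * Real.exp (-h ^ 2 / (4 * s)) := by
  have key := fourierIntegral_gaussian (b := (s : ℂ)) (by simpa using hs) (h : ℂ)
  have hint : Integrable fun x : ℝ => Complex.exp (Complex.I * h * x) *
      Complex.exp (-(s : ℂ) * (x : ℂ) ^ 2) := by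
    refine (integrable_exp_neg_mul_sq hs).mono' (by fun_prop) (.of_forall fun x => ?_)
    rw [← Complex.exp_add, Complex.norm_exp]
    simp [← Complex.ofReal_pow]
  have hre := congrArg Complex.re key
  rw [← RCLike.re_eq_complex_re, ← integral_re hint] at hre
  convert! hre using 1
  · congr 1 with x
    rw [show Complex.I * h * x = ((h * x : ℝ) : ℂ) * Complex.I by push_cast; ring,
      show -(s : ℂ) * (x : ℂ) ^ 2 = ((-s * x ^ 2 : ℝ) : ℂ) by push_cast; ring,
      ← Complex.ofReal_exp, RCLike.re_eq_complex_re, Complex.re_mul_ofReal,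
      Complex.exp_ofReal_mul_I_re]
    ring
  · rw [show -(h : ℂ) ^ 2 / (4 * s) = ((-h ^ 2 / (4 * s) : ℝ) : ℂ) by push_cast; ring,
      show (π : ℂ) / s = ((π / s : ℝ) : ℂ) by push_cast; ring,
      show (1 / 2 : ℂ) = ((1 / 2 : ℝ) : ℂ) by push_cast; ring,
      ← Complex.ofReal_exp, ← Complex.ofReal_cpow (by positivity), ← Complex.ofReal_mul,
      RCLike.re_eq_complex_re, Complex.ofReal_re, Real.sqrt_eq_rpow]

/-- The Hankel transform of order zero of a Gaussian. -/
theorem integral_mul_besselJ0_mul_exp_neg_mul_sq {s : ℝ} (hs : 0 < s) (h : ℝ) :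
    ∫ u in Set.Ioi (0:ℝ), u * besselJ0 (u * h) * Real.exp (-s * u ^ 2)
      = Real.exp (-h ^ 2 / (4 * s)) / (2 * s) := by
  have hpolar := integral_comp_polarCoord_symm (fun p : ℝ × ℝ =>
    Real.exp (-s * p.1 ^ 2) * (Real.exp (-s * p.2 ^ 2) * Real.cos (h * p.2)))
  rw [Measure.volume_eq_prod, integral_prod_mul (fun x => Real.exp (-s * x ^ 2))
    (fun x => Real.exp (-s * x ^ 2) * Real.cos (h * x)), integral_gaussian,
    integral_exp_neg_mul_sq_mul_cos hs, ← mul_assoc, Real.mul_self_sqrt (by positivity)] at hpolar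
  have hfun : ∀ p : ℝ × ℝ, p.1 • (Real.exp (-s * (polarCoord.symm p).1 ^ 2) *
      (Real.exp (-s * (polarCoord.symm p).2 ^ 2) * Real.cos (h * (polarCoord.symm p).2)))
      = p.1 * Real.exp (-s * p.1 ^ 2) * Real.cos (p.1 * h * Real.sin p.2) := by
    intro p
    simp only [polarCoord_symm_apply, smul_eq_mul]
    rw [← mul_assoc (Real.exp _), ← Real.exp_add, ← mul_assoc,
      show h * (p.1 * Real.sin p.2) = p.1 * h * Real.sin p.2 by ring,
      show -s * (p.1 * Real.cos p.2) ^ 2 + -s * (p.1 * Real.sin p.2) ^ 2 = -s * p.1 ^ 2 by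
        linear_combination (-s * p.1 ^ 2) * Real.sin_sq_add_cos_sq p.2]
  have hint : IntegrableOn (fun p : ℝ × ℝ =>
      p.1 * Real.exp (-s * p.1 ^ 2) * Real.cos (p.1 * h * Real.sin p.2))
      (Set.Ioi 0 ×ˢ Set.Ioo (-π) π) (volume.prod volume) := by
    rw [IntegrableOn, ← Measure.prod_restrict]
    refine (((integrable_mul_exp_neg_mul_sq hs).integrableOn (s := Set.Ioi 0)).mul_prod
      (integrable_const (1 : ℝ))).mono (by fun_prop) (.of_forall fun p => ?_)
    simp only [norm_mul, Real.norm_eq_abs, abs_one]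
    gcongr
    exact Real.abs_cos_le_one _
  simp only [hfun] at hpolar
  rw [show polarCoord.target = Set.Ioi (0:ℝ) ×ˢ Set.Ioo (-π) π from rfl,
    setIntegral_prod _ hint] at hpolar
  simp only [integral_const_mul, integral_cos_mul_sin] at hpolar
  have hpull : ∫ u in Set.Ioi (0:ℝ), u * Real.exp (-s * u ^ 2) * (2 * π * besselJ0 (u * h))
      = 2 * π * ∫ u in Set.Ioi (0:ℝ), u * besselJ0 (u * h) * Real.exp (-s * u ^ 2) := by
    rw [← integral_const_mul]
    congr 1 with u
    ring
  rw [hpull] at hpolar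
  refine mul_left_cancel₀ Real.two_pi_pos.ne' (hpolar.trans ?_)
  field_simp

theorem integrableOn_exp_neg_mul_cosh {c : ℝ} (hc : 0 < c) :
    IntegrableOn (fun t => Real.exp (-c * Real.cosh t)) (Set.Ioi 0) := by
  refine (exp_neg_integrableOn_Ioi 0 hc).mono' (by fun_prop) ?_
  filter_upwards [ae_restrict_mem measurableSet_Ioi] with t ht
  have ht : 0 < t := ht
  have hcosh : t ≤ Real.cosh t := by
    have := Real.sinh_lt_cosh t
    have := Real.self_le_sinh_iff.2 ht.le
    linarith
  rw [Real.norm_eq_abs, Real.abs_exp]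
  gcongr Real.exp ?_
  nlinarith

/-- The heat-kernel representation of `K₀` at a positive argument. -/
theorem integral_exp_neg_mul_sq_mul_heat {h x : ℝ} (hh : 0 < h) (hx : 0 < x) :
    ∫ s in Set.Ioi (0:ℝ), Real.exp (-s * x ^ 2) * (Real.exp (-h ^ 2 / (4 * s)) / (2 * s))
      = ∫ t in Set.Ioi (0:ℝ), Real.exp (-(h * x) * Real.cosh t) := by
  have hc : 0 < h / (2 * x) := by positivity
  have himage : (fun t => h / (2 * x) * Real.exp t) '' Set.univ = Set.Ioi 0 := by
    ext y
    simp only [Set.image_univ, Set.mem_range, Set.mem_Ioi]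
    refine ⟨?_, fun hy => ⟨Real.log (y / (h / (2 * x))), ?_⟩⟩
    · rintro ⟨t, rfl⟩
      positivity
    · rw [Real.exp_log (by positivity)]
      field_simp
  have hcov := integral_image_eq_integral_abs_deriv_smul MeasurableSet.univ
    (f := fun t => h / (2 * x) * Real.exp t) (f' := fun t => h / (2 * x) * Real.exp t)
    (fun t _ => ((Real.hasDerivAt_exp t).const_mul _).hasDerivWithinAt)
    (fun a _ b _ hab => Real.exp_injective (mul_left_cancel₀ hc.ne' hab))
    (fun s => Real.exp (-s * x ^ 2) * (Real.exp (-h ^ 2 / (4 * s)) / (2 * s)))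
  have hfun : ∀ t : ℝ, |h / (2 * x) * Real.exp t| •
      (Real.exp (-(h / (2 * x) * Real.exp t) * x ^ 2) *
        (Real.exp (-h ^ 2 / (4 * (h / (2 * x) * Real.exp t))) /
          (2 * (h / (2 * x) * Real.exp t))))
      = (1 / 2) * Real.exp (-(h * x) * Real.cosh |t|) := by
    intro t
    have hsum : -(h * x) * Real.cosh t = -(h / (2 * x) * Real.exp t) * x ^ 2 +
        -h ^ 2 / (4 * (h / (2 * x) * Real.exp t)) := by
      rw [Real.cosh_eq, Real.exp_neg]
      field_simp
      ring
    rw [Real.cosh_abs, hsum, Real.exp_add, abs_of_pos (by positivity), smul_eq_mul]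
    field_simp
  rw [himage] at hcov
  simp only [hfun, setIntegral_univ] at hcov
  rw [hcov, integral_const_mul, integral_comp_abs (f := fun t => Real.exp (-(h * x) * Real.cosh t))]
  ring

theorem integrableOn_exp_neg_mul_sq_mul_heat {h x : ℝ} (hh : 0 < h) (hx : 0 < x) :
    IntegrableOn (fun s => Real.exp (-s * x ^ 2) * (Real.exp (-h ^ 2 / (4 * s)) / (2 * s)))
      (Set.Ioi 0) := by
  refine ((exp_neg_integrableOn_Ioi 0 (pow_pos hx 2)).const_mul (2 / h ^ 2)).mono'
    (by measurability) ?_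
  filter_upwards [ae_restrict_mem measurableSet_Ioi] with s hs
  have hs : 0 < s := hs
  rw [Real.norm_eq_abs, abs_of_pos (by positivity), mul_comm (2 / h ^ 2),
    show -s * x ^ 2 = -x ^ 2 * s by ring]
  refine mul_le_mul_of_nonneg_left ?_ (Real.exp_nonneg _)
  have hexp : h ^ 2 / (4 * s) ≤ Real.exp (h ^ 2 / (4 * s)) := by
    linarith [Real.add_one_le_exp (h ^ 2 / (4 * s))]
  have hmul := (div_le_iff₀ (by positivity)).1 hexp
  rw [neg_div, Real.exp_neg, ← one_div, div_div, div_le_div_iff₀ (by positivity) (by positivity)]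
  linarith

theorem integrable_mul_sub_inv {x : ℝ} (hx : 1 < x) :
    Integrable fun u : ℝ => u * (1 / (u ^ 2 + 1 ^ 2) - 1 / (u ^ 2 + x ^ 2)) := by
  refine (integrable_inv_one_add_sq.const_mul (x ^ 2)).mono' (by measurability)
    (.of_forall fun u => ?_)
  have hx2 : 1 < x ^ 2 := by nlinarith
  have hsub : u * (1 / (u ^ 2 + 1 ^ 2) - 1 / (u ^ 2 + x ^ 2))
      = (x ^ 2 - 1) * (1 + u ^ 2)⁻¹ * (u / (u ^ 2 + x ^ 2)) := by
    field_simp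
    ring
  have hu : |u / (u ^ 2 + x ^ 2)| ≤ 1 := by
    rw [abs_div, abs_of_pos (by positivity : 0 < u ^ 2 + x ^ 2), div_le_one (by positivity)]
    nlinarith [sq_abs u, sq_nonneg (|u| - 1)]
  rw [hsub, norm_mul, Real.norm_eq_abs, Real.norm_eq_abs, abs_mul, abs_of_pos (by linarith),
    abs_of_pos (by positivity)]
  calc _ ≤ (x ^ 2 - 1) * (1 + u ^ 2)⁻¹ * 1 := by
        gcongr
    _ ≤ _ := by
        rw [mul_one]
        gcongr
        linarith

theorem integrableOn_exp_mul_sub {x u : ℝ} (hx : 1 < x) :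
    IntegrableOn (fun s => Real.exp (-s * u ^ 2) *
      (Real.exp (-s * 1 ^ 2) - Real.exp (-s * x ^ 2))) (Set.Ioi 0) ∧
    ∫ s in Set.Ioi (0:ℝ), Real.exp (-s * u ^ 2) *
      (Real.exp (-s * 1 ^ 2) - Real.exp (-s * x ^ 2))
      = 1 / (u ^ 2 + 1 ^ 2) - 1 / (u ^ 2 + x ^ 2) := by
  have hfun : ∀ s : ℝ, Real.exp (-s * u ^ 2) * (Real.exp (-s * 1 ^ 2) - Real.exp (-s * x ^ 2))
      = Real.exp (-(u ^ 2 + 1 ^ 2) * s) - Real.exp (-(u ^ 2 + x ^ 2) * s) := by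
    intro s
    rw [mul_sub, ← Real.exp_add, ← Real.exp_add]
    ring_nf
  have h1 : -(u ^ 2 + 1 ^ 2) < 0 := by nlinarith [sq_nonneg u]
  have h2 : -(u ^ 2 + x ^ 2) < 0 := by nlinarith [sq_nonneg u]
  simp only [hfun]
  refine ⟨(integrableOn_exp_mul_Ioi h1 0).sub (integrableOn_exp_mul_Ioi h2 0), ?_⟩
  rw [integral_sub (integrableOn_exp_mul_Ioi h1 0) (integrableOn_exp_mul_Ioi h2 0),
    integral_exp_mul_Ioi h1, integral_exp_mul_Ioi h2]
  simp only [mul_zero, Real.exp_zero, neg_div_neg_eq]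

/-- The regularised Hankel transform of `1 / (u² + x²)` at a real point `x > 1`. -/
theorem integral_mul_besselJ0_mul_sub_inv_of_real {h x : ℝ} (hh : 0 < h) (hx : 1 < x) :
    ∫ u in Set.Ioi (0:ℝ), u * besselJ0 (u * h) * (1 / (u ^ 2 + 1 ^ 2) - 1 / (u ^ 2 + x ^ 2))
      = (∫ t in Set.Ioi (0:ℝ), Real.exp (-(h * 1) * Real.cosh t))
        - ∫ t in Set.Ioi (0:ℝ), Real.exp (-(h * x) * Real.cosh t) := by
  have hdiff : ∀ s ∈ Set.Ioi (0:ℝ), 0 ≤ Real.exp (-s * 1 ^ 2) - Real.exp (-s * x ^ 2) := by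
    intro s hs
    have hs : 0 < s := hs
    refine sub_nonneg.2 (Real.exp_le_exp.2 ?_)
    nlinarith [mul_pos hs (sub_pos.2 hx)]
  have hdom : Integrable (fun p : ℝ × ℝ => p.1 * (Real.exp (-p.2 * p.1 ^ 2) *
      (Real.exp (-p.2 * 1 ^ 2) - Real.exp (-p.2 * x ^ 2))))
      ((volume.restrict (Set.Ioi 0)).prod (volume.restrict (Set.Ioi 0))) := by
    rw [integrable_prod_iff (by fun_prop)]
    refine ⟨.of_forall fun u => (integrableOn_exp_mul_sub hx).1.const_mul u,
      (integrable_mul_sub_inv hx).integrableOn.congr ?_⟩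
    filter_upwards [ae_restrict_mem measurableSet_Ioi] with u hu
    rw [← (integrableOn_exp_mul_sub hx).2, ← integral_const_mul]
    refine setIntegral_congr_fun measurableSet_Ioi fun s hs => ?_
    have := hdiff s hs
    have hu : 0 < u := hu
    exact (Real.norm_of_nonneg (by positivity)).symm
  have hint : Integrable (Function.uncurry fun u s : ℝ =>
      u * besselJ0 (u * h) * (Real.exp (-s * u ^ 2) *
        (Real.exp (-s * 1 ^ 2) - Real.exp (-s * x ^ 2))))
      ((volume.restrict (Set.Ioi 0)).prod (volume.restrict (Set.Ioi 0))) := by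
    have hJ := continuous_besselJ0
    refine hdom.mono (by simp only [Function.uncurry_def]; fun_prop) (.of_forall fun p => ?_)
    simp only [Function.uncurry, norm_mul]
    gcongr
    exact mul_le_of_le_one_right (norm_nonneg _) (abs_besselJ0_le_one _)
  have hswap := integral_integral_swap hint
  simp only [integral_const_mul, (integrableOn_exp_mul_sub hx).2] at hswap
  rw [hswap, ← integral_exp_neg_mul_sq_mul_heat hh one_pos,
    ← integral_exp_neg_mul_sq_mul_heat hh (by linarith),
    ← integral_sub (integrableOn_exp_neg_mul_sq_mul_heat hh one_pos)
      (integrableOn_exp_neg_mul_sq_mul_heat hh (by linarith))]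
  refine setIntegral_congr_fun measurableSet_Ioi fun s hs => ?_
  rw [← sub_mul, ← integral_mul_besselJ0_mul_exp_neg_mul_sq hs, ← integral_const_mul]
  congr 1 with u
  ring

theorem besselK0C_ofReal (x : ℝ) :
    besselK0C x = ((∫ t in Set.Ioi (0:ℝ), Real.exp (-x * Real.cosh t) : ℝ) : ℂ) := by
  rw [besselK0C, ← integral_complex_ofReal]
  congr 1 with t
  push_cast
  rfl

theorem differentiableAt_besselK0C {w : ℂ} (hw : 0 < w.re) : DifferentiableAt ℂ besselK0C w := by
  have hnorm : ∀ (v : ℂ) (t : ℝ), ‖Complex.exp (-v * (Real.cosh t : ℂ))‖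
      = Real.exp (-v.re * Real.cosh t) := by
    intro v t
    rw [Complex.norm_exp, Complex.re_mul_ofReal, Complex.neg_re]
  refine (hasDerivAt_integral_of_dominated_loc_of_deriv_le (𝕜 := ℂ)
    (μ := volume.restrict (Set.Ioi (0:ℝ)))
    (F := fun v t => Complex.exp (-v * (Real.cosh t : ℂ)))
    (F' := fun v t => Complex.exp (-v * (Real.cosh t : ℂ)) * (-(Real.cosh t : ℂ)))
    (s := {v : ℂ | w.re / 2 < v.re})
    (bound := fun t => 4 / w.re * Real.exp (-(w.re / 4) * Real.cosh t))
    ((isOpen_lt continuous_const Complex.continuous_re).mem_nhds (half_lt_self hw))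
    (.of_forall fun v => ?_) ?_ ?_ (.of_forall fun t v hv => ?_) ?_
    (.of_forall fun t v _ => ?_)).2.differentiableAt
  · exact (by fun_prop : Continuous fun t : ℝ =>
      Complex.exp (-v * (Real.cosh t : ℂ))).aestronglyMeasurable
  · refine (integrableOn_exp_neg_mul_cosh hw).mono' (by fun_prop) (.of_forall fun t => ?_)
    rw [hnorm]
  · exact (by fun_prop : Continuous fun t : ℝ =>
      Complex.exp (-w * (Real.cosh t : ℂ)) * (-(Real.cosh t : ℂ))).aestronglyMeasurable
  · have hv : w.re / 2 < v.re := hv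
    have hcosh := Real.cosh_pos t
    rw [norm_mul, hnorm, norm_neg, Complex.norm_real, Real.norm_of_nonneg hcosh.le]
    have hle : Real.cosh t ≤ 4 / w.re * Real.exp (w.re / 4 * Real.cosh t) := by
      rw [div_mul_eq_mul_div, le_div_iff₀ hw]
      linarith [Real.add_one_le_exp (w.re / 4 * Real.cosh t)]
    calc Real.exp (-v.re * Real.cosh t) * Real.cosh t
        ≤ Real.exp (-(w.re / 2) * Real.cosh t) *
            (4 / w.re * Real.exp (w.re / 4 * Real.cosh t)) := by gcongr
      _ = 4 / w.re * Real.exp (-(w.re / 4) * Real.cosh t) := by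
        rw [mul_left_comm, ← Real.exp_add]
        ring_nf
  · exact (integrableOn_exp_neg_mul_cosh (by positivity)).const_mul _
  · simpa using ((hasDerivAt_id v).neg.mul_const (Real.cosh t : ℂ)).cexp

theorem exists_forall_mul_one_add_sq_le_norm {x : ℝ} (hx : 0 < x) (M : ℝ) :
    ∃ c : ℝ, 0 < c ∧ ∀ z : ℂ, x ≤ z.re → ‖z‖ ≤ M → ∀ u : ℝ,
      c * (1 + u ^ 2) ≤ ‖(u : ℂ) ^ 2 + z ^ 2‖ := by
  set D : ℝ := 2 + (2 * M ^ 2 + 1) / x ^ 2 with hD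
  have hDpos : 0 < D := by positivity
  refine ⟨D⁻¹, inv_pos.2 hDpos, fun z hz hzM u => ?_⟩
  have him : z.im ^ 2 ≤ M ^ 2 := by
    rw [← sq_abs]
    exact pow_le_pow_left₀ (abs_nonneg _) ((Complex.abs_im_le_norm z).trans hzM) 2
  have hre : 2 * M ^ 2 + 1 ≤ (2 * M ^ 2 + 1) / x ^ 2 * z.re ^ 2 := by
    rw [div_mul_eq_mul_div, le_div_iff₀ (by positivity)]
    gcongr
  have hfactor : ∀ y : ℝ, y ^ 2 = z.im ^ 2 → D⁻¹ * (1 + u ^ 2) ≤ (u - y) ^ 2 + z.re ^ 2 := by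
    intro y hy
    rw [inv_mul_le_iff₀ hDpos, hD]
    have hq : 0 ≤ (2 * M ^ 2 + 1) / x ^ 2 * (u - y) ^ 2 := by positivity
    nlinarith [sq_nonneg (u - 2 * y), sq_nonneg z.re]
  have hminus := hfactor z.im rfl
  have hplus := hfactor (-z.im) (by ring)
  have hnorm : ‖(u : ℂ) ^ 2 + z ^ 2‖ ^ 2
      = ((u - z.im) ^ 2 + z.re ^ 2) * ((u - -z.im) ^ 2 + z.re ^ 2) := by
    rw [← Complex.normSq_eq_norm_sq, Complex.normSq_apply]
    simp only [Complex.add_re, Complex.add_im, pow_two, Complex.mul_re, Complex.mul_im,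
      Complex.ofReal_re, Complex.ofReal_im]
    ring
  refine (sq_le_sq₀ (by positivity) (norm_nonneg _)).1 ?_
  rw [hnorm, pow_two]
  gcongr

theorem mul_inv_sq_le_inv (u : ℝ) : |u| * ((1 + u ^ 2) ^ 2)⁻¹ ≤ (1 + u ^ 2)⁻¹ := by
  rw [← div_eq_mul_inv, div_le_iff₀ (by positivity), pow_two (1 + u ^ 2),
    inv_mul_cancel_left₀ (by positivity)]
  nlinarith [sq_abs u, sq_nonneg (|u| - 1)]

theorem norm_mul_besselJ0_le (u h : ℝ) : ‖((u * besselJ0 (u * h) : ℝ) : ℂ)‖ ≤ |u| := by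
  rw [Complex.norm_real, Real.norm_eq_abs, abs_mul]
  exact mul_le_of_le_one_right (abs_nonneg _) (abs_besselJ0_le_one _)

theorem sq_add_sq_ne_zero {z : ℂ} (hz : 0 < z.re) (u : ℝ) : (u : ℂ) ^ 2 + z ^ 2 ≠ 0 := by
  obtain ⟨c, hc, hle⟩ := exists_forall_mul_one_add_sq_le_norm hz ‖z‖
  exact norm_pos_iff.1 (lt_of_lt_of_le (by positivity) (hle z le_rfl le_rfl u))

theorem continuous_hankelIntegrand (h : ℝ) {z : ℂ} (hz : 0 < z.re) :
    Continuous fun u : ℝ => ((u * besselJ0 (u * h) : ℝ) : ℂ) *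
      (1 / ((u : ℂ) ^ 2 + 1 ^ 2) - 1 / ((u : ℂ) ^ 2 + z ^ 2)) := by
  have hJ := continuous_besselJ0
  have h1 := sq_add_sq_ne_zero (z := 1) (by simp)
  have hz := sq_add_sq_ne_zero hz
  fun_prop (disch := first | exact h1 | exact hz)

theorem integrable_hankelIntegrand (h : ℝ) {z : ℂ} (hz : 0 < z.re) :
    Integrable fun u : ℝ => ((u * besselJ0 (u * h) : ℝ) : ℂ) *
      (1 / ((u : ℂ) ^ 2 + 1 ^ 2) - 1 / ((u : ℂ) ^ 2 + z ^ 2)) := by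
  obtain ⟨c, hc, hle⟩ := exists_forall_mul_one_add_sq_le_norm hz ‖z‖
  refine (integrable_inv_one_add_sq.const_mul ((‖z‖ ^ 2 + 1) * c⁻¹)).mono'
    (continuous_hankelIntegrand h hz).aestronglyMeasurable (.of_forall fun u => ?_)
  have hone : ‖(u : ℂ) ^ 2 + 1 ^ 2‖ = 1 + u ^ 2 := by
    rw [show (u : ℂ) ^ 2 + 1 ^ 2 = ((1 + u ^ 2 : ℝ) : ℂ) by push_cast; ring, Complex.norm_real,
      Real.norm_of_nonneg (by positivity)]
  rw [div_sub_div _ _ (sq_add_sq_ne_zero (z := 1) (by simp) u) (sq_add_sq_ne_zero hz u),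
    show 1 * ((u : ℂ) ^ 2 + z ^ 2) - ((u : ℂ) ^ 2 + 1 ^ 2) * 1 = z ^ 2 - 1 by ring,
    norm_mul, norm_div, norm_mul, hone]
  calc _ ≤ |u| * ((‖z‖ ^ 2 + 1) / ((1 + u ^ 2) * (c * (1 + u ^ 2)))) := by
        gcongr
        · exact norm_mul_besselJ0_le u h
        · exact (norm_sub_le _ _).trans (by simp)
        · exact hle z le_rfl le_rfl u
    _ = (‖z‖ ^ 2 + 1) * c⁻¹ * (|u| * ((1 + u ^ 2) ^ 2)⁻¹) := by
        field_simp
    _ ≤ _ := by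
        gcongr
        exact mul_inv_sq_le_inv u

theorem differentiableAt_integral_hankelIntegrand (h : ℝ) {z : ℂ} (hz : 0 < z.re) :
    DifferentiableAt ℂ (fun z : ℂ => ∫ u in Set.Ioi (0:ℝ), ((u * besselJ0 (u * h) : ℝ) : ℂ) *
      (1 / ((u : ℂ) ^ 2 + 1 ^ 2) - 1 / ((u : ℂ) ^ 2 + z ^ 2))) z := by
  have hJ := continuous_besselJ0
  obtain ⟨c, hc, hle⟩ := exists_forall_mul_one_add_sq_le_norm (half_pos hz) (‖z‖ + 1)
  have hs : IsOpen {v : ℂ | z.re / 2 < v.re ∧ ‖v‖ < ‖z‖ + 1} :=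
    (isOpen_lt continuous_const Complex.continuous_re).inter
      (isOpen_lt continuous_norm continuous_const)
  have hre : IsOpen {v : ℂ | 0 < v.re} := isOpen_lt continuous_const Complex.continuous_re
  refine (hasDerivAt_integral_of_dominated_loc_of_deriv_le (𝕜 := ℂ)
    (μ := volume.restrict (Set.Ioi (0:ℝ)))
    (F := fun v u => ((u * besselJ0 (u * h) : ℝ) : ℂ) *
      (1 / ((u : ℂ) ^ 2 + 1 ^ 2) - 1 / ((u : ℂ) ^ 2 + v ^ 2)))
    (F' := fun v u => ((u * besselJ0 (u * h) : ℝ) : ℂ) *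
      (2 * v / ((u : ℂ) ^ 2 + v ^ 2) ^ 2))
    (bound := fun u => 2 * (‖z‖ + 1) * (c ^ 2)⁻¹ * (1 + u ^ 2)⁻¹)
    (hs.mem_nhds ⟨half_lt_self hz, lt_add_one _⟩)
    ?_ (integrable_hankelIntegrand h hz).integrableOn ?_ (.of_forall fun u v hv => ?_)
    (integrable_inv_one_add_sq.const_mul _).integrableOn
    (.of_forall fun u v hv => ?_)).2.differentiableAt
  · filter_upwards [hre.mem_nhds hz] with v hv
    exact (continuous_hankelIntegrand h hv).aestronglyMeasurable
  · have hne := sq_add_sq_ne_zero hz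
    refine Continuous.aestronglyMeasurable ?_
    fun_prop (disch := exact fun u => pow_ne_zero 2 (hne u))
  · rw [norm_mul, norm_div, norm_mul, norm_pow, Complex.norm_ofNat]
    calc _ ≤ |u| * (2 * (‖z‖ + 1) / (c * (1 + u ^ 2)) ^ 2) := by
          gcongr
          · exact norm_mul_besselJ0_le u h
          · exact hv.2.le
          · exact hle v hv.1.le hv.2.le u
      _ = 2 * (‖z‖ + 1) * (c ^ 2)⁻¹ * (|u| * ((1 + u ^ 2) ^ 2)⁻¹) := by
          field_simp
      _ ≤ _ := by
          gcongr
          exact mul_inv_sq_le_inv u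
  · have hvre : 0 < v.re := (half_pos hz).trans hv.1
    have hinv := ((hasDerivAt_pow 2 v).const_add ((u : ℂ) ^ 2)).fun_inv (sq_add_sq_ne_zero hvre u)
    have hder := (hinv.const_sub (1 / ((u : ℂ) ^ 2 + 1 ^ 2))).const_mul
      ((u * besselJ0 (u * h) : ℝ) : ℂ)
    simpa [one_div, neg_div] using hder

/-- The regularised Hankel transform of `1 / (u² + z²)` in the right half-plane. -/
theorem integral_hankelIntegrand_eq {h : ℝ} (hh : 0 < h) {z : ℂ} (hz : 0 < z.re) :
    ∫ u in Set.Ioi (0:ℝ), ((u * besselJ0 (u * h) : ℝ) : ℂ) *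
      (1 / ((u : ℂ) ^ 2 + 1 ^ 2) - 1 / ((u : ℂ) ^ 2 + z ^ 2))
      = besselK0C h - besselK0C (h * z) := by
  have hU : IsOpen {z : ℂ | 0 < z.re} := isOpen_lt continuous_const Complex.continuous_re
  have hlhs : DifferentiableOn ℂ (fun z : ℂ => ∫ u in Set.Ioi (0:ℝ),
      ((u * besselJ0 (u * h) : ℝ) : ℂ) *
      (1 / ((u : ℂ) ^ 2 + 1 ^ 2) - 1 / ((u : ℂ) ^ 2 + z ^ 2))) {z : ℂ | 0 < z.re} :=
    fun z hz => (differentiableAt_integral_hankelIntegrand h hz).differentiableWithinAt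
  have hrhs : DifferentiableOn ℂ (fun z : ℂ => besselK0C h - besselK0C (h * z))
      {z : ℂ | 0 < z.re} := by
    intro z hz
    have hz : 0 < z.re := hz
    have hK : DifferentiableAt ℂ besselK0C (h * z) :=
      differentiableAt_besselK0C (by rw [Complex.re_ofReal_mul]; positivity)
    exact ((hK.comp z (differentiableAt_id.const_mul (h : ℂ))).const_sub _).differentiableWithinAt
  have hreal : ∀ x : ℝ, 1 < x → ∫ u in Set.Ioi (0:ℝ), ((u * besselJ0 (u * h) : ℝ) : ℂ) *
      (1 / ((u : ℂ) ^ 2 + 1 ^ 2) - 1 / ((u : ℂ) ^ 2 + (x : ℂ) ^ 2))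
      = besselK0C h - besselK0C (h * x) := by
    intro x hx
    rw [← Complex.ofReal_mul, besselK0C_ofReal, besselK0C_ofReal, ← Complex.ofReal_sub]
    nth_rewrite 2 [← mul_one h]
    rw [← integral_mul_besselJ0_mul_sub_inv_of_real hh hx, ← integral_complex_ofReal]
    congr 1 with u
    push_cast
    rfl
  have hfreq : ∃ᶠ z in nhdsWithin (1 : ℂ) {1}ᶜ, (∫ u in Set.Ioi (0:ℝ),
      ((u * besselJ0 (u * h) : ℝ) : ℂ) *
      (1 / ((u : ℂ) ^ 2 + 1 ^ 2) - 1 / ((u : ℂ) ^ 2 + z ^ 2)))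
      = besselK0C h - besselK0C (h * z) := by
    have htendsto : Filter.Tendsto (fun x : ℝ => (x : ℂ)) (nhdsWithin 1 (Set.Ioi 1))
        (nhdsWithin (1 : ℂ) {1}ᶜ) := by
      refine tendsto_nhdsWithin_iff.2 ⟨?_, ?_⟩
      · simpa using (Complex.continuous_ofReal.tendsto (1 : ℝ)).mono_left nhdsWithin_le_nhds
      · filter_upwards [self_mem_nhdsWithin] with x hx
        have hx : (1 : ℝ) < x := hx
        simpa using hx.ne'
    refine htendsto.frequently (Filter.Eventually.frequently ?_)
    filter_upwards [self_mem_nhdsWithin] with x hx using hreal x hx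
  exact (hlhs.analyticOnNhd hU).eqOn_of_preconnected_of_frequently_eq (hrhs.analyticOnNhd hU)
    (convex_halfSpace_re_gt 0).isPreconnected (by simp) hfreq hz

/-- Two-dimensional Spartan covariance, case `|η₁| < 2`. -/
theorem spartan_covariance_abs_eta1_lt_two (η1 h β : ℝ)
    (hη1 : -2 < η1) (hη2 : η1 < 2) (hh : 0 < h)
    (hβ : β = Real.sqrt (4 - η1 ^ 2))
    (zp : ℂ) (hzp : zp ^ 2 = ((η1 : ℂ) - Complex.I * (β : ℂ)) / 2)
    (hre : 0 < zp.re) :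
    (∫ u in Set.Ioi (0:ℝ), u * besselJ0 (u * h) / (1 + η1 * u ^ 2 + u ^ 4))
      = (2 / β) * (besselK0C ((h : ℂ) * zp)).im ∧
    ∀ η0 : ℝ, 0 < η0 →
      (η0 / (2 * Real.pi)) *
          (∫ u in Set.Ioi (0:ℝ), u * besselJ0 (u * h) / (1 + η1 * u ^ 2 + u ^ 4))
        = η0 * (besselK0C ((h : ℂ) * zp)).im / (Real.pi * Real.sqrt (4 - η1 ^ 2)) := by
  have hpos : 0 < 4 - η1 ^ 2 := by nlinarith
  have hβpos : 0 < β := hβ ▸ Real.sqrt_pos.2 hpos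
  have hβsq : β ^ 2 = 4 - η1 ^ 2 := hβ ▸ Real.sq_sqrt hpos.le
  have him : ∀ u : ℝ, (((u * besselJ0 (u * h) : ℝ) : ℂ) *
      (1 / ((u : ℂ) ^ 2 + 1 ^ 2) - 1 / ((u : ℂ) ^ 2 + zp ^ 2))).im
      = -(β / 2) * (u * besselJ0 (u * h) / (1 + η1 * u ^ 2 + u ^ 4)) := by
    intro u
    have hone : (1 / ((u : ℂ) ^ 2 + 1 ^ 2)).im = 0 := by
      rw [show 1 / ((u : ℂ) ^ 2 + 1 ^ 2) = ((1 / (u ^ 2 + 1 ^ 2) : ℝ) : ℂ) by push_cast; rfl,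
        Complex.ofReal_im]
    have hsum : (u : ℂ) ^ 2 + zp ^ 2 = ⟨u ^ 2 + η1 / 2, -(β / 2)⟩ := by
      rw [hzp]
      apply Complex.ext <;> simp [← Complex.ofReal_pow, neg_div]
    have hnorm : Complex.normSq ⟨u ^ 2 + η1 / 2, -(β / 2)⟩ = 1 + η1 * u ^ 2 + u ^ 4 := by
      rw [Complex.normSq_mk]
      linear_combination hβsq / 4
    rw [Complex.im_ofReal_mul, Complex.sub_im, hone, hsum, one_div, Complex.inv_im, hnorm]
    ring
  have hmain : (∫ u in Set.Ioi (0:ℝ), u * besselJ0 (u * h) / (1 + η1 * u ^ 2 + u ^ 4))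
      = (2 / β) * (besselK0C ((h : ℂ) * zp)).im := by
    have key := congrArg Complex.im (integral_hankelIntegrand_eq hh hre)
    rw [← RCLike.im_eq_complex_im,
      ← integral_im (integrable_hankelIntegrand h hre).integrableOn] at key
    simp only [RCLike.im_eq_complex_im, him, Complex.sub_im] at key
    rw [integral_const_mul, besselK0C_ofReal, Complex.ofReal_im, zero_sub] at key
    rw [div_mul_eq_mul_div, eq_div_iff hβpos.ne']
    linarith
  refine ⟨hmain, fun η0 _ => ?_⟩
  rw [hmain, ← hβ]
  field_simp
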